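/- If α ∈ ℝ is irrational and its Liouville–Roth constant satisfies μ₀(α) > 2, then for every β > 0 the set F₂(α,β) = {(j,k) ∈ ℤ² : |k − jα| < β} has Property A; that is, every nonnegative trigonometric polynomial on 𝕋² with frequencies in F₂(α,β) − F₂(α,β) is a uniform limit of functions |q|² with q a trigonometric polynomial with frequencies in F₂(α,β). -/

import Mathlib

open Complex MeasureTheory Real Filter

noncomputable section

/-- The circle group `𝕋 = ℝ/ℤ`. -/
abbrev 𝕋 := AddCircle (1 : ℝ)

/-- `F₂(α,β) = {(j,k) ∈ ℤ² : |k − jα| < β}`. -/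
def F2set (α β : ℝ) : Set (ℤ × ℤ) := {jk | |(jk.2 : ℝ) - (jk.1 : ℝ) * α| < β}

/-- `t : 𝕋² → ℂ` is a trigonometric polynomial. -/
def IsTrigPoly2 (t : 𝕋 × 𝕋 → ℂ) : Prop :=
  ∃ c : (ℤ × ℤ) →₀ ℂ, t = fun p => ∑ jk ∈ c.support, c jk * fourier jk.1 p.1 * fourier jk.2 p.2

/-- Fourier coefficient on the 2-torus. -/
def coeff2 (t : 𝕋 × 𝕋 → ℂ) (jk : ℤ × ℤ) : ℂ :=
  ∫ x : 𝕋, (∫ y : 𝕋, t (x, y) * fourier (-jk.1) x * fourier (-jk.2) y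
    ∂AddCircle.haarAddCircle) ∂AddCircle.haarAddCircle

/-- The frequency set of `t : 𝕋² → ℂ`. -/
def freq2 (t : 𝕋 × 𝕋 → ℂ) : Set (ℤ × ℤ) := {jk | coeff2 t jk ≠ 0}

/-- `𝔗₂(F)` : trigonometric polynomials on `𝕋²` with frequencies in `F`. -/
def T2 (F : Set (ℤ × ℤ)) : Set (𝕋 × 𝕋 → ℂ) := {t | IsTrigPoly2 t ∧ freq2 t ⊆ F}

/-- `𝔖₂(F) = {|q|² : q ∈ 𝔗₂(F)}`. -/
def S2 (F : Set (ℤ × ℤ)) : Set (𝕋 × 𝕋 → ℂ) :=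
  {f | ∃ q ∈ T2 F, f = fun p => q p * (starRingEnd ℂ) (q p)}

/-- `𝔘₂(F)` : trigonometric polynomials that are uniform limits of elements of `𝔖₂(F)`. -/
def U2 (F : Set (ℤ × ℤ)) : Set (𝕋 × 𝕋 → ℂ) :=
  {t | IsTrigPoly2 t ∧ ∃ s : ℕ → (𝕋 × 𝕋 → ℂ), (∀ n, s n ∈ S2 F) ∧ TendstoUniformly s t atTop}

/-- The difference set `F − F`. -/
def diffSet {G : Type*} [Sub G] (F : Set G) : Set G := {x | ∃ u ∈ F, ∃ v ∈ F, x = u - v}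

/-- `F ⊆ ℤ²` has Property A if `𝔘₂(F) = 𝔗₂⁺(F − F)`, i.e. the trigonometric polynomials
on `𝕋²` that are uniform limits of squared moduli `|q|²` with `freq(q) ⊆ F` are exactly
the nonnegative trigonometric polynomials with frequencies in `F − F`. -/
def PropertyA (F : Set (ℤ × ℤ)) : Prop :=
  U2 F = {t | IsTrigPoly2 t ∧ freq2 t ⊆ diffSet F ∧ ∀ p, ∃ r : ℝ, 0 ≤ r ∧ t p = (r : ℂ)}

/-!
A strictly positive trigonometric polynomial is, up to a constant factor, of the form `1 - s` with
`‖s‖ < 1`. Order the frequencies by an additive map `φ` to an ordered group. The power series of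
`-log (1 - s)` splits as `G + star G` with `G` supported on the half-plane `0 ≤ φ`: cutting a
trigonometric polynomial to a half-plane costs at most its number of frequencies, which for `s ^ k`
grows polynomially in `k`, against the geometric decay of `‖s‖ ^ k`. Hence `1 - s = h * star h` with
`h = exp (-G)`, whose frequencies satisfy `0 ≤ φ`. As also `h = (1 - s) * star (exp G)`, the
frequencies of `h` satisfy `φ ≤ L` as soon as those of `1 - s` do, and multiplying `h` by a
character moves them into any order-convex `φ ⁻¹' J` in whose difference set the frequency of
`1 - s` that is highest with respect to `φ` lies. It remains to approximate `h` by trigonometric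
polynomials with the same frequencies, and to treat `f ≥ 0` as the limit of `f + ε`.
-/

section Characters

/-- The character `(x, y) ↦ e^{2πi(jx + ky)}` of the torus, for `n = (j, k)`. -/
def torusChar (n : ℤ × ℤ) : C(𝕋 × 𝕋, ℂ) :=
  ⟨fun p => fourier n.1 p.1 * fourier n.2 p.2, by fun_prop⟩

lemma torusChar_apply (n : ℤ × ℤ) (p : 𝕋 × 𝕋) :
    torusChar n p = fourier n.1 p.1 * fourier n.2 p.2 := rfl

lemma torusChar_zero : torusChar 0 = 1 := by
  ext p
  simp [torusChar_apply]

lemma torusChar_add (m n : ℤ × ℤ) : torusChar (m + n) = torusChar m * torusChar n := by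
  ext p
  simp only [torusChar_apply, ContinuousMap.mul_apply, Prod.fst_add, Prod.snd_add, fourier_add]
  ring

lemma torusChar_neg (n : ℤ × ℤ) : torusChar (-n) = star (torusChar n) := by
  ext p
  simp [torusChar_apply]

lemma torusChar_mul_star_self (n : ℤ × ℤ) : torusChar n * star (torusChar n) = 1 := by
  rw [← torusChar_neg, ← torusChar_add, add_neg_cancel, torusChar_zero]

lemma torusChar_apply_add (n : ℤ × ℤ) (p q : 𝕋 × 𝕋) :
    torusChar n (p + q) = torusChar n p * torusChar n q := by
  simp only [torusChar_apply, Prod.fst_add, Prod.snd_add, fourier_apply, smul_add,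
    AddCircle.toCircle_add, Circle.coe_mul]
  ring

lemma norm_torusChar_apply (n : ℤ × ℤ) (p : 𝕋 × 𝕋) : ‖torusChar n p‖ = 1 := by
  rw [torusChar_apply, norm_mul, fourier_apply, fourier_apply, Circle.norm_coe, Circle.norm_coe,
    one_mul]

lemma norm_torusChar_le_one (n : ℤ × ℤ) : ‖torusChar n‖ ≤ 1 :=
  (ContinuousMap.norm_le _ zero_le_one).2 fun p => (norm_torusChar_apply n p).le

end Characters

section Coefficients

/-- The normalized Haar measure of the torus, as a product of two measures on the circle. -/
abbrev torusHaar : Measure (𝕋 × 𝕋) :=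
  (AddCircle.haarAddCircle (T := (1 : ℝ))).prod AddCircle.haarAddCircle

lemma integrable_of_continuous_of_compactSpace {X E : Type*} [TopologicalSpace X] [CompactSpace X]
    [MeasurableSpace X] [OpensMeasurableSpace X] [NormedAddCommGroup E] {μ : Measure X}
    [IsFiniteMeasureOnCompacts μ] {f : X → E} (hf : Continuous f) : Integrable f μ :=
  hf.integrable_of_hasCompactSupport (HasCompactSupport.of_compactSpace f)

/-- The `n`-th Fourier coefficient of a function on the torus, as a bounded linear functional. -/
def torusCoeff (n : ℤ × ℤ) : C(𝕋 × 𝕋, ℂ) →L[ℂ] ℂ :=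
  LinearMap.mkContinuous
    { toFun := fun f => ∫ p, f p * torusChar (-n) p ∂torusHaar
      map_add' := fun f g => by
        simp only [ContinuousMap.add_apply, add_mul]
        exact integral_add (integrable_of_continuous_of_compactSpace (by fun_prop))
          (integrable_of_continuous_of_compactSpace (by fun_prop))
      map_smul' := fun c f => by
        simp only [ContinuousMap.smul_apply, smul_eq_mul, mul_assoc, RingHom.id_apply]
        exact integral_const_mul _ _ }
    1 fun f => by
      refine (norm_integral_le_of_norm_le_const (C := ‖f‖) (.of_forall fun p => ?_)).trans ?_
      · rw [norm_mul, norm_torusChar_apply, mul_one]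
        exact f.norm_coe_le_norm p
      · simp

lemma torusCoeff_apply (n : ℤ × ℤ) (f : C(𝕋 × 𝕋, ℂ)) :
    torusCoeff n f = ∫ p, f p * torusChar (-n) p ∂torusHaar := rfl

lemma norm_torusCoeff_le (n : ℤ × ℤ) (f : C(𝕋 × 𝕋, ℂ)) : ‖torusCoeff n f‖ ≤ ‖f‖ := by
  simpa using (torusCoeff n).le_of_opNorm_le (LinearMap.mkContinuous_norm_le _ zero_le_one _) f

lemma torusCoeff_star (n : ℤ × ℤ) (f : C(𝕋 × 𝕋, ℂ)) :
    torusCoeff n (star f) = star (torusCoeff (-n) f) := by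
  rw [torusCoeff_apply, torusCoeff_apply, RCLike.star_def, ← integral_conj, torusChar_neg (-n)]
  simp

lemma coeff2_eq_torusCoeff (f : C(𝕋 × 𝕋, ℂ)) (n : ℤ × ℤ) : coeff2 f n = torusCoeff n f := by
  rw [torusCoeff_apply,
    integral_prod _ (integrable_of_continuous_of_compactSpace
      (f := fun p => f p * torusChar (-n) p) (by fun_prop))]
  simp only [coeff2, torusChar_apply, mul_assoc, Prod.fst_neg, Prod.snd_neg]

lemma integral_fourier (k : ℤ) :
    ∫ x : 𝕋, fourier k x ∂AddCircle.haarAddCircle = if k = 0 then (1 : ℂ) else 0 := by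
  have h := congrFun (fourierCoeff_fourier (T := 1) k) 0
  simpa [fourierCoeff, Pi.single_apply, eq_comm] using h

lemma integral_torusChar (n : ℤ × ℤ) :
    ∫ p, torusChar n p ∂torusHaar = if n = 0 then 1 else 0 := by
  simp only [torusChar_apply]
  rw [integral_prod_mul (fun x : 𝕋 => (fourier n.1 x : ℂ)) (fun x : 𝕋 => (fourier n.2 x : ℂ)),
    integral_fourier, integral_fourier, ite_zero_mul_ite_zero, mul_one]
  exact if_congr (by simp [Prod.ext_iff]) rfl rfl

lemma torusCoeff_torusChar (n m : ℤ × ℤ) :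
    torusCoeff n (torusChar m) = if m = n then 1 else 0 := by
  simp only [torusCoeff_apply, ← ContinuousMap.mul_apply, ← torusChar_add, ← sub_eq_add_neg,
    integral_torusChar, sub_eq_zero]

end Coefficients

section TrigSpan

open scoped Pointwise

/-- The trigonometric polynomials with frequencies in `S`, as continuous functions. -/
def trigSpan (S : Set (ℤ × ℤ)) : Submodule ℂ C(𝕋 × 𝕋, ℂ) := Submodule.span ℂ (torusChar '' S)

variable {S T : Set (ℤ × ℤ)} {f g : C(𝕋 × 𝕋, ℂ)}

lemma torusChar_mem_trigSpan {n : ℤ × ℤ} (hn : n ∈ S) : torusChar n ∈ trigSpan S :=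
  Submodule.subset_span ⟨n, hn, rfl⟩

lemma trigSpan_mono (h : S ⊆ T) : trigSpan S ≤ trigSpan T :=
  Submodule.span_mono (Set.image_mono h)

lemma one_mem_trigSpan (h : 0 ∈ S) : 1 ∈ trigSpan S :=
  torusChar_zero ▸ torusChar_mem_trigSpan h

lemma mul_mem_trigSpan (hf : f ∈ trigSpan S) (hg : g ∈ trigSpan T) : f * g ∈ trigSpan (S + T) := by
  have h := Submodule.mul_mem_mul hf hg
  rw [trigSpan, trigSpan, Submodule.span_mul_span] at h
  refine Submodule.span_mono ?_ h
  rintro _ ⟨_, ⟨s, hs, rfl⟩, _, ⟨t, ht, rfl⟩, rfl⟩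
  exact ⟨s + t, Set.add_mem_add hs ht, torusChar_add s t⟩

lemma star_mem_trigSpan (hf : f ∈ trigSpan S) : star f ∈ trigSpan (-S) := by
  induction hf using Submodule.span_induction with
  | mem x hx =>
    obtain ⟨n, hn, rfl⟩ := hx
    exact torusChar_neg n ▸ torusChar_mem_trigSpan (Set.neg_mem_neg.2 hn)
  | zero => simp
  | add x y _ _ hx hy => exact star_add x y ▸ add_mem hx hy
  | smul a x _ hx => exact star_smul a x ▸ Submodule.smul_mem _ _ hx

/-- The algebra of trigonometric polynomials with frequencies in a monoid of frequencies. -/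
def trigSubalgebra (M : AddSubmonoid (ℤ × ℤ)) : Subalgebra ℂ C(𝕋 × 𝕋, ℂ) :=
  (trigSpan (M : Set (ℤ × ℤ))).toSubalgebra (one_mem_trigSpan M.zero_mem) fun _ _ hf hg =>
    trigSpan_mono (Set.add_subset_iff.2 fun _ hm _ hn => M.add_mem hm hn) (mul_mem_trigSpan hf hg)

lemma mem_trigSpan_iff_exists_finsupp :
    f ∈ trigSpan S ↔ ∃ c : (ℤ × ℤ) →₀ ℂ, (c.support : Set (ℤ × ℤ)) ⊆ S ∧
      f = ∑ n ∈ c.support, c n • torusChar n := by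
  simp only [trigSpan, Finsupp.mem_span_image_iff_linearCombination, Finsupp.mem_supported,
    Finsupp.linearCombination_apply, Finsupp.sum, eq_comm]

lemma eq_sum_torusCoeff_smul {B : Finset (ℤ × ℤ)} (hf : f ∈ trigSpan B) :
    f = ∑ n ∈ B, torusCoeff n f • torusChar n := by
  obtain ⟨c, rfl⟩ := (Submodule.mem_span_image_finset_iff_exists_fun' ℂ).1 hf
  refine Finset.sum_congr rfl fun n hn => ?_
  congr 1
  simp [torusCoeff_torusChar, hn]

lemma exists_finset_mem_trigSpan (hf : f ∈ trigSpan S) :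
    ∃ B : Finset (ℤ × ℤ), ↑B ⊆ S ∧ f ∈ trigSpan B := by
  obtain ⟨c, hc, rfl⟩ := mem_trigSpan_iff_exists_finsupp.1 hf
  exact ⟨c.support, hc, mem_trigSpan_iff_exists_finsupp.2 ⟨c, subset_rfl, rfl⟩⟩

lemma torusCoeff_eq_zero_of_mem_closure (hf : f ∈ (trigSpan S).topologicalClosure) {n : ℤ × ℤ}
    (hn : n ∉ S) : torusCoeff n f = 0 := by
  have hspan : trigSpan S ≤ (torusCoeff n).ker := by
    refine Submodule.span_le.2 ?_
    rintro _ ⟨m, hm, rfl⟩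
    have hmn : m ≠ n := fun h => hn (h ▸ hm)
    simp [torusCoeff_torusChar, hmn]
  exact Submodule.topologicalClosure_minimal _ hspan (torusCoeff n).isClosed_ker hf

lemma mem_trigSpan_of_torusCoeff_eq_zero (hf : f ∈ trigSpan T)
    (h : ∀ n ∉ S, torusCoeff n f = 0) : f ∈ trigSpan S := by
  obtain ⟨B, -, hB⟩ := exists_finset_mem_trigSpan hf
  rw [eq_sum_torusCoeff_smul hB]
  refine Submodule.sum_mem _ fun n _ => ?_
  by_cases hn : n ∈ S
  · exact Submodule.smul_mem _ _ (torusChar_mem_trigSpan hn)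
  · rw [h n hn, zero_smul ℂ (torusChar n)]
    exact zero_mem _

end TrigSpan

section Frequencies

lemma isTrigPoly2_iff {t : 𝕋 × 𝕋 → ℂ} : IsTrigPoly2 t ↔ ∃ f ∈ trigSpan Set.univ, ⇑f = t := by
  have hcoe (c : (ℤ × ℤ) →₀ ℂ) : ⇑(∑ n ∈ c.support, c n • torusChar n) =
      fun p => ∑ n ∈ c.support, c n * fourier n.1 p.1 * fourier n.2 p.2 := by
    ext p
    simp [ContinuousMap.sum_apply, torusChar_apply, mul_assoc]
  constructor
  · rintro ⟨c, rfl⟩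
    exact ⟨_, mem_trigSpan_iff_exists_finsupp.2 ⟨c, Set.subset_univ _, rfl⟩, hcoe c⟩
  · rintro ⟨f, hf, rfl⟩
    obtain ⟨c, -, rfl⟩ := mem_trigSpan_iff_exists_finsupp.1 hf
    exact ⟨c, hcoe c⟩

lemma freq2_subset_iff {f : C(𝕋 × 𝕋, ℂ)} {F : Set (ℤ × ℤ)} :
    freq2 f ⊆ F ↔ ∀ n ∉ F, torusCoeff n f = 0 := by
  simp only [freq2, Set.ofPred_subset, coeff2_eq_torusCoeff]
  exact forall_congr' fun n => not_imp_comm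

lemma mem_T2_iff {F : Set (ℤ × ℤ)} {t : 𝕋 × 𝕋 → ℂ} : t ∈ T2 F ↔ ∃ f ∈ trigSpan F, ⇑f = t := by
  constructor
  · rintro ⟨ht, hfreq⟩
    obtain ⟨f, hf, rfl⟩ := isTrigPoly2_iff.1 ht
    exact ⟨f, mem_trigSpan_of_torusCoeff_eq_zero hf (freq2_subset_iff.1 hfreq), rfl⟩
  · rintro ⟨f, hf, rfl⟩
    exact ⟨isTrigPoly2_iff.2 ⟨f, trigSpan_mono (Set.subset_univ F) hf, rfl⟩,
      freq2_subset_iff.2 fun n => torusCoeff_eq_zero_of_mem_closure (subset_closure hf)⟩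

end Frequencies

section Fejer

/-- The continuous family of translates `q ↦ h (· + q)`. -/
def translates (h : C(𝕋 × 𝕋, ℂ)) : C(𝕋 × 𝕋, C(𝕋 × 𝕋, ℂ)) :=
  (h.comp ⟨fun z : (𝕋 × 𝕋) × (𝕋 × 𝕋) => z.2 + z.1, by fun_prop⟩).curry

lemma translates_apply (h : C(𝕋 × 𝕋, ℂ)) (q p : 𝕋 × 𝕋) : translates h q p = h (p + q) := rfl

lemma integrable_smul_translates (h K : C(𝕋 × 𝕋, ℂ)) :
    Integrable (fun q => K q • translates h q) torusHaar :=
  integrable_of_continuous_of_compactSpace (K.continuous.smul (translates h).continuous)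

/-- The average `∫ K(q) h(· + q) dq` of the translates of `h`, that is, the convolution of `h` with
the reflected kernel `K(-·)`; it is linear in `K`. -/
def translateAverage (h : C(𝕋 × 𝕋, ℂ)) : C(𝕋 × 𝕋, ℂ) →ₗ[ℂ] C(𝕋 × 𝕋, ℂ) where
  toFun K := ∫ q, K q • translates h q ∂torusHaar
  map_add' K K' := by
    simp only [ContinuousMap.add_apply, add_smul (M := C(𝕋 × 𝕋, ℂ))]
    exact integral_add (integrable_smul_translates h K) (integrable_smul_translates h K')
  map_smul' a K := by
    simp only [ContinuousMap.smul_apply, smul_assoc, RingHom.id_apply]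
    exact integral_smul a _

lemma translateAverage_apply (h K : C(𝕋 × 𝕋, ℂ)) :
    translateAverage h K = ∫ q, K q • translates h q ∂torusHaar := rfl

lemma translateAverage_torusChar (h : C(𝕋 × 𝕋, ℂ)) (m : ℤ × ℤ) :
    translateAverage h (torusChar m) = torusCoeff (-m) h • torusChar (-m) := by
  ext p
  have hp : torusChar m p * torusChar (-m) p = 1 := by
    rw [← ContinuousMap.mul_apply, ← torusChar_add, add_neg_cancel, torusChar_zero,
      ContinuousMap.one_apply]
  calc translateAverage h (torusChar m) p
      = ∫ q, torusChar m q * h (p + q) ∂torusHaar :=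
        ((ContinuousMap.evalCLM ℂ p).integral_comp_comm
          (integrable_smul_translates h (torusChar m))).symm
    _ = ∫ q, h (p + q) * torusChar m (p + q) * torusChar (-m) p ∂torusHaar := by
        congr 1 with q
        rw [torusChar_apply_add]
        linear_combination (-torusChar m q * h (p + q)) * hp
    _ = ∫ q, h q * torusChar m q * torusChar (-m) p ∂torusHaar :=
        integral_add_left_eq_self (fun q => h q * torusChar m q * torusChar (-m) p) p
    _ = torusCoeff (-m) h * torusChar (-m) p := by
        rw [integral_mul_const, torusCoeff_apply, neg_neg]

lemma translateAverage_mem_trigSpan {S : Set (ℤ × ℤ)} {h K : C(𝕋 × 𝕋, ℂ)}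
    (hh : ∀ n ∉ S, torusCoeff n h = 0) (hK : K ∈ trigSpan Set.univ) :
    translateAverage h K ∈ trigSpan S := by
  have hspan : trigSpan Set.univ ≤ (trigSpan S).comap (translateAverage h) := by
    refine Submodule.span_le.2 ?_
    rintro _ ⟨m, -, rfl⟩
    rw [SetLike.mem_coe, Submodule.mem_comap, translateAverage_torusChar]
    by_cases hm : -m ∈ S
    · exact Submodule.smul_mem _ _ (torusChar_mem_trigSpan hm)
    · rw [hh _ hm, zero_smul ℂ (torusChar (-m))]
      exact zero_mem _
  exact hspan hK

lemma norm_one_add_lt_two {z : ℂ} (hz : ‖z‖ = 1) (hne : z ≠ 1) : ‖1 + z‖ < 2 := by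
  have hlt : ‖1 + z‖ < ‖(1 : ℂ)‖ + ‖z‖ :=
    norm_add_lt_of_not_sameRay ((not_sameRay_iff_of_norm_eq (norm_one.trans hz.symm)).2 hne.symm)
  rwa [norm_one, hz, one_add_one_eq_two] at hlt

lemma norm_one_add_torusChar_apply_le (n : ℤ × ℤ) (p : 𝕋 × 𝕋) : ‖1 + torusChar n p‖ ≤ 2 := by
  refine (norm_add_le _ _).trans_eq ?_
  rw [norm_one, norm_torusChar_apply, one_add_one_eq_two]

lemma eq_zero_of_torusChar_eq_one {p : 𝕋 × 𝕋} (h₁ : torusChar (1, 0) p = 1)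
    (h₂ : torusChar (0, 1) p = 1) : p = 0 := by
  have fourier_one_eq_one (x : 𝕋) : (fourier 1 x : ℂ) = 1 ↔ x = 0 := by
    rw [fourier_one, Circle.coe_eq_one, ← AddCircle.toCircle_zero (T := 1),
      (AddCircle.injective_toCircle one_ne_zero).eq_iff]
  simp only [torusChar_apply, fourier_zero, mul_one, one_mul, fourier_one_eq_one] at h₁ h₂
  exact Prod.ext h₁ h₂

/-- A nonnegative trigonometric polynomial with a unique maximum, at the origin; its normalized
powers are the approximate identity used here in place of the Fejér kernels. -/
def torusPeak : C(𝕋 × 𝕋, ℝ) :=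
  ⟨fun p => ‖1 + torusChar (1, 0) p‖ ^ 2 + ‖1 + torusChar (0, 1) p‖ ^ 2, by fun_prop⟩

lemma torusPeak_apply (p : 𝕋 × 𝕋) :
    torusPeak p = ‖1 + torusChar (1, 0) p‖ ^ 2 + ‖1 + torusChar (0, 1) p‖ ^ 2 := rfl

lemma torusPeak_nonneg (p : 𝕋 × 𝕋) : 0 ≤ torusPeak p := by
  rw [torusPeak_apply]
  positivity

lemma torusPeak_zero : torusPeak 0 = 8 := by
  norm_num [torusPeak_apply, torusChar_apply]

lemma torusPeak_lt_torusPeak_zero {p : 𝕋 × 𝕋} (hp : p ≠ 0) : torusPeak p < torusPeak 0 := by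
  have hle (n : ℤ × ℤ) : ‖1 + torusChar n p‖ ^ 2 ≤ 2 ^ 2 := by
    gcongr
    exact norm_one_add_torusChar_apply_le n p
  have hlt {n : ℤ × ℤ} (hn : torusChar n p ≠ 1) : ‖1 + torusChar n p‖ ^ 2 < 2 ^ 2 := by
    gcongr
    exact norm_one_add_lt_two (norm_torusChar_apply n p) hn
  rw [torusPeak_zero, torusPeak_apply]
  by_cases h₁ : torusChar (1, 0) p = 1
  · linarith [hle (1, 0), hlt fun h₂ => hp (eq_zero_of_torusChar_eq_one h₁ h₂)]
  · linarith [hlt h₁, hle (0, 1)]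

lemma exists_mem_trigSpan_eq_torusPeak :
    ∃ K ∈ trigSpan Set.univ, ∀ p, K p = torusPeak p := by
  have hmem (n : ℤ × ℤ) :
      (1 + torusChar n) * star (1 + torusChar n) ∈ trigSpan Set.univ := by
    have h : 1 + torusChar n ∈ trigSpan Set.univ :=
      add_mem (one_mem_trigSpan trivial) (torusChar_mem_trigSpan trivial)
    exact trigSpan_mono (Set.subset_univ _) (mul_mem_trigSpan h (star_mem_trigSpan h))
  refine ⟨_, add_mem (hmem (1, 0)) (hmem (0, 1)), fun p => ?_⟩
  simp only [torusPeak_apply, ContinuousMap.add_apply, ContinuousMap.mul_apply,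
    ContinuousMap.star_apply, ContinuousMap.one_apply, RCLike.star_def, mul_conj', ofReal_add,
    ofReal_pow]

theorem mem_closure_trigSpan_iff {S : Set (ℤ × ℤ)} {h : C(𝕋 × 𝕋, ℂ)} :
    h ∈ (trigSpan S).topologicalClosure ↔ ∀ n ∉ S, torusCoeff n h = 0 := by
  refine ⟨fun hh n => torusCoeff_eq_zero_of_mem_closure hh, fun hh => ?_⟩
  have htendsto := tendsto_setIntegral_pow_smul_of_unique_maximum_of_isCompact_of_continuousOn
    (μ := torusHaar) isCompact_univ torusPeak.continuous.continuousOn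
    (fun p _ => torusPeak_lt_torusPeak_zero) (fun p _ => torusPeak_nonneg p)
    (by norm_num [torusPeak_zero]) (by simp) (translates h).continuous.continuousOn
  have hzero : translates h 0 = h := by
    ext p
    rw [translates_apply, add_zero]
  rw [hzero] at htendsto
  refine mem_closure_of_tendsto htendsto (.of_forall fun N => ?_)
  obtain ⟨K, hK, hKpeak⟩ := exists_mem_trigSpan_eq_torusPeak
  have haverage : ∫ q in Set.univ, torusPeak q ^ N • translates h q ∂torusHaar =
      translateAverage h (K ^ N) := by
    rw [setIntegral_univ, translateAverage_apply]
    congr 1 with q : 1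
    rw [ContinuousMap.pow_apply, hKpeak, ← ofReal_pow]
    exact (coe_smul (torusPeak q ^ N) (translates h q)).symm
  rw [haverage]
  exact (trigSpan S).smul_of_tower_mem _
    (translateAverage_mem_trigSpan hh (pow_mem (S := trigSubalgebra ⊤) hK N))

end Fejer

section Closure

open scoped Pointwise

variable {S T : Set (ℤ × ℤ)} {f g : C(𝕋 × 𝕋, ℂ)}

lemma mul_mem_closure_trigSpan (hf : f ∈ (trigSpan S).topologicalClosure)
    (hg : g ∈ (trigSpan T).topologicalClosure) : f * g ∈ (trigSpan (S + T)).topologicalClosure :=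
  map_mem_closure₂ continuous_mul hf hg fun _ ha _ hb => mul_mem_trigSpan ha hb

lemma star_mem_closure_trigSpan (hf : f ∈ (trigSpan S).topologicalClosure) :
    star f ∈ (trigSpan (-S)).topologicalClosure :=
  map_mem_closure continuous_star hf fun _ => star_mem_trigSpan

lemma mem_closure_trigSpan_inter (hS : f ∈ (trigSpan S).topologicalClosure)
    (hT : f ∈ (trigSpan T).topologicalClosure) : f ∈ (trigSpan (S ∩ T)).topologicalClosure := by
  rw [mem_closure_trigSpan_iff] at *
  intro n hn
  by_cases hnS : n ∈ S
  · exact hT n fun hnT => hn ⟨hnS, hnT⟩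
  · exact hS n hnS

lemma exp_mem_closure_trigSpan {M : AddSubmonoid (ℤ × ℤ)}
    (hf : f ∈ (trigSpan (M : Set (ℤ × ℤ))).topologicalClosure) :
    NormedSpace.exp f ∈ (trigSpan (M : Set (ℤ × ℤ))).topologicalClosure :=
  NormedSpace.exp_mem (R := ℂ) (s := (trigSubalgebra M).topologicalClosure)
    (trigSubalgebra M).isClosed_topologicalClosure hf

end Closure

section FrequencyBox

open scoped Pointwise

/-- The square of frequencies with coordinates at most `D` in absolute value. -/
def freqBox (D : ℕ) : Finset (ℤ × ℤ) := Finset.Icc (-(D : ℤ × ℤ)) D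

lemma card_freqBox (D : ℕ) : (freqBox D).card = (2 * D + 1) ^ 2 := by
  have h : ((D : ℤ) + 1 + D).toNat = 2 * D + 1 := by lia
  simp [freqBox, Finset.card_Icc_prod, h, sq]

lemma neg_mem_freqBox_iff {D : ℕ} {n : ℤ × ℤ} : -n ∈ freqBox D ↔ n ∈ freqBox D := by
  simp only [freqBox, Finset.mem_Icc, neg_le_neg_iff, neg_le, and_comm]

lemma exists_mem_trigSpan_freqBox {f : C(𝕋 × 𝕋, ℂ)} (hf : f ∈ trigSpan Set.univ) :
    ∃ D : ℕ, f ∈ trigSpan (freqBox D : Set (ℤ × ℤ)) := by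
  obtain ⟨B, -, hB⟩ := exists_finset_mem_trigSpan hf
  refine ⟨B.sup fun n => max n.1.natAbs n.2.natAbs, trigSpan_mono (fun n hn => ?_) hB⟩
  have hle := Finset.le_sup (f := fun n : ℤ × ℤ => max n.1.natAbs n.2.natAbs) hn
  simp only [freqBox, Finset.coe_Icc, Set.mem_Icc, Prod.le_def, Prod.fst_neg, Prod.snd_neg,
    Prod.fst_natCast, Prod.snd_natCast]
  lia

lemma pow_mem_trigSpan_freqBox {D : ℕ} {f : C(𝕋 × 𝕋, ℂ)}
    (hf : f ∈ trigSpan (freqBox D : Set (ℤ × ℤ))) (k : ℕ) :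
    f ^ k ∈ trigSpan (freqBox (k * D) : Set (ℤ × ℤ)) := by
  induction k with
  | zero => exact pow_zero f ▸ one_mem_trigSpan (by simp [freqBox])
  | succ k ih =>
    rw [pow_succ]
    refine trigSpan_mono ?_ (mul_mem_trigSpan ih hf)
    rw [← Finset.coe_add, Finset.coe_subset]
    refine (Finset.Icc_add_Icc_subset _ _ _ _).trans_eq ?_
    rw [freqBox]
    congr 1 <;> push_cast <;> ring

end FrequencyBox

section HalfPlane

variable {Γ : Type*} [AddCommGroup Γ] [LinearOrder Γ]

/-- The multiplier `1`, `1/2`, `0` according to whether `φ n` is positive, zero or negative. The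
value on `φ n = 0` makes the multipliers of `n` and `-n` add up to `1`. -/
def halfPlaneWeight (φ : ℤ × ℤ →+ Γ) (n : ℤ × ℤ) : ℝ := (1 + SignType.sign (φ n)) / 2

lemma halfPlaneWeight_of_neg {φ : ℤ × ℤ →+ Γ} {n : ℤ × ℤ} (h : φ n < 0) :
    halfPlaneWeight φ n = 0 := by
  simp [halfPlaneWeight, sign_neg h]

lemma abs_halfPlaneWeight_le_one (φ : ℤ × ℤ →+ Γ) (n : ℤ × ℤ) : |halfPlaneWeight φ n| ≤ 1 := by
  rw [halfPlaneWeight]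
  cases SignType.sign (φ n) <;> norm_num

/-- Fourier multiplier with symbol `halfPlaneWeight φ` on functions with frequencies in `B`. -/
def halfPlaneProj (φ : ℤ × ℤ →+ Γ) (B : Finset (ℤ × ℤ)) (f : C(𝕋 × 𝕋, ℂ)) : C(𝕋 × 𝕋, ℂ) :=
  ∑ n ∈ B, (halfPlaneWeight φ n * torusCoeff n f : ℂ) • torusChar n

lemma halfPlaneProj_mem_trigSpan (φ : ℤ × ℤ →+ Γ) (B : Finset (ℤ × ℤ)) (f : C(𝕋 × 𝕋, ℂ)) :
    halfPlaneProj φ B f ∈ trigSpan (φ ⁻¹' Set.Ici 0) := by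
  refine Submodule.sum_mem _ fun n _ => ?_
  rcases lt_or_ge (φ n) 0 with hn | hn
  · rw [halfPlaneWeight_of_neg hn, ofReal_zero, zero_mul, zero_smul ℂ (torusChar n)]
    exact zero_mem _
  · exact Submodule.smul_mem _ _ (torusChar_mem_trigSpan hn)

lemma norm_halfPlaneProj_le (φ : ℤ × ℤ →+ Γ) (B : Finset (ℤ × ℤ)) (f : C(𝕋 × 𝕋, ℂ)) :
    ‖halfPlaneProj φ B f‖ ≤ B.card * ‖f‖ := by
  rw [← nsmul_eq_mul]
  refine norm_sum_le_of_le _ (fun n _ => ?_) |>.trans_eq (Finset.sum_const _)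
  calc ‖(halfPlaneWeight φ n * torusCoeff n f : ℂ) • torusChar n‖
      = |halfPlaneWeight φ n| * ‖torusCoeff n f‖ * ‖torusChar n‖ := by
        rw [norm_smul, norm_mul, norm_real, Real.norm_eq_abs]
    _ ≤ 1 * ‖f‖ * 1 := by
        gcongr
        exacts [abs_halfPlaneWeight_le_one φ n, norm_torusCoeff_le n f, norm_torusChar_le_one n]
    _ = ‖f‖ := by ring

variable [IsOrderedAddMonoid Γ]

lemma halfPlaneWeight_add_neg (φ : ℤ × ℤ →+ Γ) (n : ℤ × ℤ) :
    halfPlaneWeight φ n + halfPlaneWeight φ (-n) = 1 := by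
  rw [halfPlaneWeight, halfPlaneWeight, map_neg, Left.sign_neg, SignType.coe_neg]
  ring

lemma halfPlaneProj_add_star {φ : ℤ × ℤ →+ Γ} {B : Finset (ℤ × ℤ)} (hB : ∀ n, -n ∈ B ↔ n ∈ B)
    {f : C(𝕋 × 𝕋, ℂ)} (hf : f ∈ trigSpan (B : Set (ℤ × ℤ))) (hself : IsSelfAdjoint f) :
    halfPlaneProj φ B f + star (halfPlaneProj φ B f) = f := by
  have hcoeff (n : ℤ × ℤ) : star (torusCoeff n f) = torusCoeff (-n) f := by
    have h := torusCoeff_star (-n) f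
    rw [hself.star_eq, neg_neg] at h
    exact h.symm
  have hstar : star (halfPlaneProj φ B f) =
      ∑ n ∈ B, (halfPlaneWeight φ (-n) * torusCoeff n f : ℂ) • torusChar n := by
    rw [halfPlaneProj, star_sum]
    refine Finset.sum_equiv (Equiv.neg _) (fun n => (hB n).symm) fun n _ => ?_
    simp only [Equiv.neg_apply, neg_neg, torusChar_neg, ← hcoeff]
    rw [star_smul, star_mul', RCLike.star_def, conj_ofReal]
  have hweight (n : ℤ × ℤ) : (halfPlaneWeight φ n + halfPlaneWeight φ (-n) : ℂ) = 1 :=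
    mod_cast halfPlaneWeight_add_neg φ n
  conv_rhs => rw [eq_sum_torusCoeff_smul hf]
  rw [hstar, halfPlaneProj, ← Finset.sum_add_distrib]
  refine Finset.sum_congr rfl fun n _ => ?_
  rw [← add_smul (M := C(𝕋 × 𝕋, ℂ)), ← add_mul, hweight, one_mul]

end HalfPlane

section Logarithm

lemma exp_neg_of_hasSum_pow_div {X : Type*} [TopologicalSpace X] [CompactSpace X] {s L : C(X, ℂ)}
    (hs : ‖s‖ < 1) (hL : HasSum (fun k : ℕ => (k : ℂ)⁻¹ • s ^ k) L) :
    NormedSpace.exp (-L) = 1 - s := by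
  ext p
  have hsp : ‖s p‖ < 1 := (s.norm_coe_le_norm p).trans_lt hs
  have hLp : L p = -Complex.log (1 - s p) := by
    refine HasSum.unique ?_ (Complex.hasSum_taylorSeries_neg_log hsp)
    convert! hL.mapL (ContinuousMap.evalCLM ℂ p) using 2 with k
    simp [div_eq_inv_mul]
  have hexp : NormedSpace.exp (-L) p = NormedSpace.exp (-L p) :=
    NormedSpace.map_exp (ContinuousMap.evalAlgHom ℂ ℂ p) (continuous_eval_const p) _
  have hne : 1 - s p ≠ 0 := sub_ne_zero.2 fun h => by simp [← h] at hsp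
  rw [hexp, hLp, neg_neg, ← Complex.exp_eq_exp_ℂ, Complex.exp_log hne, ContinuousMap.sub_apply,
    ContinuousMap.one_apply]

lemma summable_two_mul_add_one_sq_mul_geometric (D : ℝ) {r : ℝ} (hr : ‖r‖ < 1) :
    Summable fun k : ℕ => (2 * (k * D) + 1) ^ 2 * r ^ k := by
  have h (j : ℕ) := summable_pow_mul_geometric_of_norm_lt_one j hr
  refine ((((h 2).mul_left (4 * D ^ 2)).add ((h 1).mul_left (4 * D))).add (h 0)).congr fun k => ?_
  ring

variable {Γ : Type*} [AddCommGroup Γ] [LinearOrder Γ]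

/-- The `k`-th term of the part of the power series of `-log (1 - s)` supported on the half-plane
`0 ≤ φ`, for `s` with frequencies in `freqBox D`. The term `k = 0` vanishes because `0⁻¹ = 0`. -/
def halfPlaneLogTerm (φ : ℤ × ℤ →+ Γ) (D : ℕ) (s : C(𝕋 × 𝕋, ℂ)) (k : ℕ) : C(𝕋 × 𝕋, ℂ) :=
  (k : ℂ)⁻¹ • halfPlaneProj φ (freqBox (k * D)) (s ^ k)

lemma halfPlaneLogTerm_mem_trigSpan (φ : ℤ × ℤ →+ Γ) (D : ℕ) (s : C(𝕋 × 𝕋, ℂ)) (k : ℕ) :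
    halfPlaneLogTerm φ D s k ∈ trigSpan (φ ⁻¹' Set.Ici 0) :=
  Submodule.smul_mem _ _ (halfPlaneProj_mem_trigSpan _ _ _)

-- The number of frequencies of `s ^ k` grows only polynomially in `k`.
lemma summable_halfPlaneLogTerm (φ : ℤ × ℤ →+ Γ) (D : ℕ) {s : C(𝕋 × 𝕋, ℂ)} (hs : ‖s‖ < 1) :
    Summable (halfPlaneLogTerm φ D s) := by
  refine .of_norm_bounded
    (summable_two_mul_add_one_sq_mul_geometric D ((norm_norm s).trans_lt hs)) fun k => ?_
  have hinv : ‖(k : ℂ)⁻¹‖ ≤ 1 := by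
    rw [norm_inv, Complex.norm_natCast]
    exact Nat.cast_inv_le_one k
  calc ‖halfPlaneLogTerm φ D s k‖
      ≤ 1 * ((freqBox (k * D)).card * ‖s ^ k‖) := by
        rw [halfPlaneLogTerm, norm_smul]
        gcongr
        exact norm_halfPlaneProj_le _ _ _
    _ ≤ (2 * (k * D) + 1) ^ 2 * ‖s‖ ^ k := by
        rw [one_mul, card_freqBox]
        push_cast
        gcongr
        exact norm_pow_le s k

variable [IsOrderedAddMonoid Γ]

lemma halfPlaneLogTerm_add_star (φ : ℤ × ℤ →+ Γ) {D : ℕ} {s : C(𝕋 × 𝕋, ℂ)}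
    (hs : s ∈ trigSpan (freqBox D : Set (ℤ × ℤ))) (hself : IsSelfAdjoint s) (k : ℕ) :
    halfPlaneLogTerm φ D s k + star (halfPlaneLogTerm φ D s k) = (k : ℂ)⁻¹ • s ^ k := by
  have hinv : star (k : ℂ)⁻¹ = (k : ℂ)⁻¹ := by simp
  have hsum : halfPlaneProj φ (freqBox (k * D)) (s ^ k) +
      star (halfPlaneProj φ (freqBox (k * D)) (s ^ k)) = s ^ k :=
    halfPlaneProj_add_star (fun _ => neg_mem_freqBox_iff) (pow_mem_trigSpan_freqBox hs k)
      (hself.pow k)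
  rw [halfPlaneLogTerm, star_smul, hinv]
  exact (smul_add (k : ℂ)⁻¹ _ _).symm.trans (congrArg _ hsum)

theorem exists_exp_neg_add_star_eq_one_sub (φ : ℤ × ℤ →+ Γ) {s : C(𝕋 × 𝕋, ℂ)}
    (hs : s ∈ trigSpan Set.univ) (hself : IsSelfAdjoint s) (hnorm : ‖s‖ < 1) :
    ∃ G ∈ (trigSpan (φ ⁻¹' Set.Ici 0)).topologicalClosure,
      NormedSpace.exp (-(G + star G)) = 1 - s := by
  obtain ⟨D, hD⟩ := exists_mem_trigSpan_freqBox hs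
  obtain ⟨G, hG⟩ := summable_halfPlaneLogTerm φ D hnorm
  refine ⟨G, ?_, exp_neg_of_hasSum_pow_div hnorm ?_⟩
  · exact (trigSpan _).isClosed_topologicalClosure.mem_of_tendsto hG (.of_forall fun B =>
      Submodule.le_topologicalClosure _
        (Submodule.sum_mem _ fun k _ => halfPlaneLogTerm_mem_trigSpan φ D s k))
  · simpa only [halfPlaneLogTerm_add_star φ hD hself] using hG.add hG.star

end Logarithm

section SpectralFactorization

open scoped Pointwise ComplexOrder

variable {Γ : Type*} [AddCommGroup Γ] [LinearOrder Γ] [IsOrderedAddMonoid Γ]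

lemma exists_mul_star_eq_one_sub (φ : ℤ × ℤ →+ Γ) {L : Γ} {s : C(𝕋 × 𝕋, ℂ)}
    (hself : IsSelfAdjoint s) (hnorm : ‖s‖ < 1) (hfreq : 1 - s ∈ trigSpan (φ ⁻¹' Set.Iic L)) :
    ∃ h ∈ (trigSpan (φ ⁻¹' Set.Icc 0 L)).topologicalClosure, h * star h = 1 - s := by
  have hs : s ∈ trigSpan Set.univ := sub_sub_cancel 1 s ▸
    sub_mem (one_mem_trigSpan trivial) (trigSpan_mono (Set.subset_univ _) hfreq)
  obtain ⟨G, hG, hexp⟩ := exists_exp_neg_add_star_eq_one_sub φ hs hself hnorm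
  have hcl {g : C(𝕋 × 𝕋, ℂ)} (hg : g ∈ (trigSpan (φ ⁻¹' Set.Ici 0)).topologicalClosure) :
      NormedSpace.exp g ∈ (trigSpan (φ ⁻¹' Set.Ici 0)).topologicalClosure :=
    exp_mem_closure_trigSpan (M := (AddSubmonoid.nonneg Γ).comap φ) hg
  have hsq : NormedSpace.exp (-G) * star (NormedSpace.exp (-G)) = 1 - s := by
    rw [NormedSpace.star_exp, star_neg, ← NormedSpace.exp_add, ← neg_add, hexp]
  have hinv : star (NormedSpace.exp (-G)) * star (NormedSpace.exp G) = 1 := by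
    rw [NormedSpace.star_exp, NormedSpace.star_exp, ← NormedSpace.exp_add, star_neg, neg_add_cancel,
      NormedSpace.exp_zero]
  have hreflect : NormedSpace.exp (-G) = (1 - s) * star (NormedSpace.exp G) := by
    rw [← hsq, mul_assoc, hinv, mul_one]
  have hupper : NormedSpace.exp (-G) ∈ (trigSpan (φ ⁻¹' Set.Iic L)).topologicalClosure := by
    rw [hreflect]
    refine Submodule.topologicalClosure_mono (trigSpan_mono ?_) (mul_mem_closure_trigSpan
      (Submodule.le_topologicalClosure _ hfreq) (star_mem_closure_trigSpan (hcl hG)))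
    rintro _ ⟨m, hm, n, hn, rfl⟩
    have hn' : φ n ≤ 0 := by simpa using hn
    simpa using add_le_add hm hn'
  exact ⟨_, mem_closure_trigSpan_inter (hcl (neg_mem hG)) hupper, hsq⟩

lemma norm_one_sub_inv_norm_smul_lt_one {X : Type*} [TopologicalSpace X] [CompactSpace X]
    {f : C(X, ℂ)} (hpos : ∀ p, 0 < f p) : ‖1 - (‖f‖⁻¹ : ℂ) • f‖ < 1 := by
  refine (ContinuousMap.norm_lt_iff _ one_pos).2 fun p => ?_
  obtain ⟨r, hr, hfp⟩ := RCLike.pos_iff_exists_ofReal.1 (hpos p)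
  have hle : r ≤ ‖f‖ := by simpa [← hfp, abs_of_pos hr] using f.norm_coe_le_norm p
  have hquot : ‖f‖⁻¹ * r ≤ 1 := inv_mul_le_one_of_le₀ hle (norm_nonneg f)
  have hquot_pos : 0 < ‖f‖⁻¹ * r := mul_pos (inv_pos.2 (hr.trans_le hle)) hr
  calc ‖(1 - (‖f‖⁻¹ : ℂ) • f) p‖ = ‖((1 - ‖f‖⁻¹ * r : ℝ) : ℂ)‖ := by simp [← hfp]
    _ = |1 - ‖f‖⁻¹ * r| := by rw [norm_real, Real.norm_eq_abs]
    _ < 1 := by rw [abs_lt]; constructor <;> linarith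

lemma isSelfAdjoint_of_apply_nonneg {X : Type*} [TopologicalSpace X] {f : C(X, ℂ)}
    (hf : ∀ p, 0 ≤ f p) : IsSelfAdjoint f :=
  ContinuousMap.ext fun p => (IsSelfAdjoint.of_nonneg (hf p)).star_eq

theorem exists_mul_star_eq_of_pos (φ : ℤ × ℤ →+ Γ) {L : Γ} {f : C(𝕋 × 𝕋, ℂ)}
    (hf : f ∈ trigSpan (φ ⁻¹' Set.Iic L)) (hpos : ∀ p, 0 < f p) :
    ∃ h ∈ (trigSpan (φ ⁻¹' Set.Icc 0 L)).topologicalClosure, h * star h = f := by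
  have hM : (‖f‖ : ℂ) ≠ 0 :=
    ofReal_ne_zero.2 (norm_ne_zero_iff.2 fun h => by simpa [h] using hpos 0)
  have hself : IsSelfAdjoint (1 - (‖f‖⁻¹ : ℂ) • f) :=
    (IsSelfAdjoint.one _).sub (.smul (by simp [isSelfAdjoint_iff])
      (isSelfAdjoint_of_apply_nonneg fun p => (hpos p).le))
  have hsub : 1 - (1 - (‖f‖⁻¹ : ℂ) • f) = (‖f‖⁻¹ : ℂ) • f := sub_sub_cancel _ _
  obtain ⟨h, hh, hsq⟩ := exists_mul_star_eq_one_sub φ hself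
    (norm_one_sub_inv_norm_smul_lt_one hpos) (hsub ▸ Submodule.smul_mem _ _ hf)
  have hsqrt : (√‖f‖ : ℂ) * star (√‖f‖ : ℂ) = ‖f‖ := by
    rw [RCLike.star_def, conj_ofReal, ← ofReal_mul, Real.mul_self_sqrt (norm_nonneg f)]
  refine ⟨(√‖f‖ : ℂ) • h, Submodule.smul_mem _ _ hh, ?_⟩
  rw [star_smul, smul_mul_smul_comm, hsqrt, hsq, hsub, smul_inv_smul₀ hM]

theorem exists_mul_star_eq_of_pos_of_ordConnected {φ : ℤ × ℤ →+ Γ} {J : Set Γ}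
    (hJ : J.OrdConnected) {f : C(𝕋 × 𝕋, ℂ)} (hf : f ∈ trigSpan (φ ⁻¹' J - φ ⁻¹' J))
    (hpos : ∀ p, 0 < f p) :
    ∃ h ∈ (trigSpan (φ ⁻¹' J)).topologicalClosure, h * star h = f := by
  obtain ⟨B, hBF, hB⟩ := exists_finset_mem_trigSpan hf
  have hne : B.Nonempty := by
    by_contra! hempty
    have hzero : f = 0 := by simpa [hempty, trigSpan] using hB
    simpa [hzero] using hpos 0
  obtain ⟨_, hmem, hmax⟩ := B.exists_max_image φ hne
  obtain ⟨u, hu, v, hv, rfl⟩ := hBF hmem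
  obtain ⟨h, hh, hsq⟩ := exists_mul_star_eq_of_pos φ (trigSpan_mono hmax hB) hpos
  have hshift : {v} + φ ⁻¹' Set.Icc 0 (φ (u - v)) ⊆ φ ⁻¹' J := by
    rintro _ ⟨_, rfl, n, ⟨hn₀, hn⟩, rfl⟩
    refine hJ.out hv hu ⟨?_, ?_⟩
    · simpa using hn₀
    · simpa [le_sub_iff_add_le'] using hn
  refine ⟨torusChar v * h, Submodule.topologicalClosure_mono (trigSpan_mono hshift)
    (mul_mem_closure_trigSpan
      (Submodule.le_topologicalClosure _ (torusChar_mem_trigSpan rfl)) hh), ?_⟩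
  rw [star_mul', mul_mul_mul_comm, torusChar_mul_star_self, one_mul, hsq]

end SpectralFactorization

section UniformLimits

open scoped Pointwise ComplexOrder Topology

lemma diffSet_eq_sub {G : Type*} [Sub G] (F : Set G) : diffSet F = F - F := by
  ext x
  simp only [diffSet, Set.mem_ofPred_eq, Set.mem_sub, eq_comm]

/-- The continuous functions `|q|²` with `q` a trigonometric polynomial with frequencies in `F`. -/
def trigSquares (F : Set (ℤ × ℤ)) : Set C(𝕋 × 𝕋, ℂ) := (fun q => q * star q) '' trigSpan F

lemma mem_S2_iff {F : Set (ℤ × ℤ)} {t : 𝕋 × 𝕋 → ℂ} : t ∈ S2 F ↔ ∃ f ∈ trigSquares F, ⇑f = t := by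
  constructor
  · rintro ⟨q, hq, rfl⟩
    obtain ⟨g, hg, rfl⟩ := mem_T2_iff.1 hq
    exact ⟨_, ⟨g, hg, rfl⟩, rfl⟩
  · rintro ⟨_, ⟨g, hg, rfl⟩, rfl⟩
    exact ⟨g, mem_T2_iff.2 ⟨g, hg, rfl⟩, rfl⟩

lemma mem_U2_iff {F : Set (ℤ × ℤ)} {t : 𝕋 × 𝕋 → ℂ} :
    t ∈ U2 F ↔ ∃ f ∈ trigSpan Set.univ, f ∈ closure (trigSquares F) ∧ ⇑f = t := by
  constructor
  · rintro ⟨ht, s, hs, hlim⟩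
    obtain ⟨f, hf, rfl⟩ := isTrigPoly2_iff.1 ht
    choose q hq hqs using fun n => mem_S2_iff.1 (hs n)
    refine ⟨f, hf, mem_closure_of_tendsto (b := atTop) (f := q)
      (ContinuousMap.tendsto_iff_tendstoUniformly.2 ?_) (.of_forall hq), rfl⟩
    simpa only [hqs] using hlim
  · rintro ⟨f, hf, hcl, rfl⟩
    obtain ⟨q, hq, hlim⟩ := mem_closure_iff_seq_limit.1 hcl
    exact ⟨isTrigPoly2_iff.2 ⟨f, hf, rfl⟩, fun n => q n, fun n => mem_S2_iff.2 ⟨_, hq n, rfl⟩,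
      ContinuousMap.tendsto_iff_tendstoUniformly.1 hlim⟩

lemma closure_trigSquares_subset_closure_trigSpan (F : Set (ℤ × ℤ)) :
    closure (trigSquares F) ⊆ (trigSpan (F - F)).topologicalClosure := by
  refine closure_mono ?_
  rintro _ ⟨q, hq, rfl⟩
  exact sub_eq_add_neg F F ▸ mul_mem_trigSpan hq (star_mem_trigSpan hq)

lemma apply_nonneg_of_mem_closure_trigSquares {F : Set (ℤ × ℤ)} {f : C(𝕋 × 𝕋, ℂ)}
    (hf : f ∈ closure (trigSquares F)) (p : 𝕋 × 𝕋) : 0 ≤ f p := by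
  refine closure_minimal (t := (fun f : C(𝕋 × 𝕋, ℂ) => f p) ⁻¹' Set.Ici 0) ?_
    (isClosed_Ici.preimage (continuous_eval_const p)) hf
  rintro _ ⟨q, -, rfl⟩
  exact mul_star_self_nonneg (q p)

theorem propertyA_iff {F : Set (ℤ × ℤ)} :
    PropertyA F ↔ ∀ f ∈ trigSpan (F - F), (∀ p, 0 ≤ f p) → f ∈ closure (trigSquares F) := by
  have hnonneg (t : 𝕋 × 𝕋 → ℂ) : (∀ p, ∃ r : ℝ, 0 ≤ r ∧ t p = r) ↔ ∀ p, 0 ≤ t p := by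
    refine forall_congr' fun p => ?_
    rw [RCLike.nonneg_iff_exists_ofReal]
    exact exists_congr fun r => and_congr_right' eq_comm
  have hsub : U2 F ⊆ {t | IsTrigPoly2 t ∧ freq2 t ⊆ diffSet F ∧ ∀ p, ∃ r : ℝ, 0 ≤ r ∧ t p = r} := by
    intro t ht
    obtain ⟨f, -, hcl, rfl⟩ := mem_U2_iff.1 ht
    refine ⟨ht.1, ?_, (hnonneg f).2 (apply_nonneg_of_mem_closure_trigSquares hcl)⟩
    rw [diffSet_eq_sub, freq2_subset_iff]
    exact mem_closure_trigSpan_iff.1 (closure_trigSquares_subset_closure_trigSpan F hcl)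
  rw [PropertyA, Set.Subset.antisymm_iff, and_iff_right hsub]
  constructor
  · intro h f hf hf₀
    obtain ⟨hpoly, hfreq⟩ := mem_T2_iff.2 ⟨f, hf, rfl⟩
    obtain ⟨g, -, hg, hgf⟩ := mem_U2_iff.1
      (h ⟨hpoly, diffSet_eq_sub F ▸ hfreq, (hnonneg f).2 hf₀⟩)
    exact DFunLike.coe_injective hgf ▸ hg
  · rintro h t ⟨hpoly, hfreq, hpos⟩
    obtain ⟨f, hf, rfl⟩ := mem_T2_iff.1 ⟨hpoly, diffSet_eq_sub F ▸ hfreq⟩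
    exact mem_U2_iff.2
      ⟨f, trigSpan_mono (Set.subset_univ _) hf, h f hf ((hnonneg f).1 hpos), rfl⟩

lemma mul_star_self_mem_closure_trigSquares {F : Set (ℤ × ℤ)} {h : C(𝕋 × 𝕋, ℂ)}
    (hh : h ∈ (trigSpan F).topologicalClosure) : h * star h ∈ closure (trigSquares F) :=
  map_mem_closure (f := fun q => q * star q) (continuous_id.mul continuous_star) hh
    fun q hq => ⟨q, hq, rfl⟩

/-- The linear form `(j, k) ↦ k - jα`, whose preimage of `(-β, β)` is `F₂(α, β)`. -/
def stripForm (α : ℝ) : ℤ × ℤ →+ ℝ :=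
  (Int.castAddHom ℝ).comp (AddMonoidHom.snd ℤ ℤ) -
    (AddMonoidHom.mulRight α).comp ((Int.castAddHom ℝ).comp (AddMonoidHom.fst ℤ ℤ))

lemma stripForm_apply (α : ℝ) (n : ℤ × ℤ) : stripForm α n = n.2 - n.1 * α := rfl

lemma F2set_eq_preimage_stripForm (α β : ℝ) : F2set α β = stripForm α ⁻¹' Set.Ioo (-β) β := by
  ext n
  simp only [F2set, Set.mem_ofPred_eq, Set.mem_preimage, stripForm_apply, Set.mem_Ioo, abs_lt]

theorem statement17_general {Γ : Type*} [AddCommGroup Γ] [LinearOrder Γ] [IsOrderedAddMonoid Γ]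
    (φ : ℤ × ℤ →+ Γ) {J : Set Γ} (hJ : J.OrdConnected) : PropertyA (φ ⁻¹' J) := by
  refine propertyA_iff.2 fun f hf hf₀ => ?_
  rcases (φ ⁻¹' J).eq_empty_or_nonempty with hempty | ⟨v, hv⟩
  · have hzero : f = 0 := by simpa [hempty, trigSpan] using hf
    exact subset_closure ⟨0, zero_mem _, by simp [hzero]⟩
  have hone : 1 ∈ trigSpan (φ ⁻¹' J - φ ⁻¹' J) := one_mem_trigSpan ⟨v, hv, v, hv, sub_self v⟩
  have hperturbed (ε : ℝ) (hε : 0 < ε) : f + (ε : ℂ) • 1 ∈ closure (trigSquares (φ ⁻¹' J)) := by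
    have hpos (p : 𝕋 × 𝕋) : 0 < (f + (ε : ℂ) • 1) p :=
      add_pos_of_nonneg_of_pos (hf₀ p) (by simpa using hε)
    obtain ⟨h, hh, hsq⟩ := exists_mul_star_eq_of_pos_of_ordConnected hJ
      (add_mem hf (Submodule.smul_mem _ _ hone)) hpos
    exact hsq ▸ mul_star_self_mem_closure_trigSquares hh
  have hlim : Tendsto (fun ε : ℝ => f + (ε : ℂ) • 1) (𝓝[>] 0) (𝓝 f) := by
    have hcont : Continuous fun ε : ℝ => f + (ε : ℂ) • (1 : C(𝕋 × 𝕋, ℂ)) := by fun_prop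
    refine (hcont.tendsto' 0 f ?_).mono_left nhdsWithin_le_nhds
    rw [ofReal_zero, zero_smul ℂ (1 : C(𝕋 × 𝕋, ℂ)), add_zero]
  exact isClosed_closure.mem_of_tendsto hlim (eventually_mem_nhdsWithin.mono hperturbed)

end UniformLimits

/-- If `α` is irrational with Liouville–Roth constant `μ₀(α) > 2` — that is, there is
`μ > 2` such that infinitely many pairs of coprime integers `(c,d)`, `d ≠ 0`, satisfy
`|α − c/d| < 1/|d|^μ` — then for every `β > 0` the set `F₂(α,β)` has Property A. -/
theorem statement17 (α : ℝ) (hirr : Irrational α)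
    (hmu : ∃ μ : ℝ, 2 < μ ∧
      {cd : ℤ × ℤ | IsCoprime cd.1 cd.2 ∧ cd.2 ≠ 0 ∧
        |α - (cd.1 : ℝ) / (cd.2 : ℝ)| < 1 / |(cd.2 : ℝ)| ^ μ}.Infinite)
    (β : ℝ) (hβ : 0 < β) :
    PropertyA (F2set α β) := by
  exact F2set_eq_preimage_stripForm α β ▸ statement17_general (stripForm α) Set.ordConnected_Ioo
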